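/- Let T be a finite tree rooted at r and let p ≥ 2·h(T). There exists an optimal solution 𝓘 of the Min-Immersions problem (a feasible covering minimizing the number of immersions |𝓘|) such that every leaf of T belongs to the vertex set of exactly one immersion of 𝓘. -/

import Mathlib

open SimpleGraph Finset

/-- Cost of a subgraph-immersion: twice the number of its edges. -/
noncomputable def immCost {V : Type*} {G : SimpleGraph V} (I : G.Subgraph) : ℕ :=
  2 * I.edgeSet.ncard

/-- An immersion is a connected subgraph of `G` containing the root `r`. -/
def IsImmersion {V : Type*} {G : SimpleGraph V} (r : V) (I : G.Subgraph) : Prop :=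
  I.Connected ∧ r ∈ I.verts

/-- Height of the rooted tree: maximum distance from the root. -/
noncomputable def treeHeight {V : Type*} [Fintype V] (G : SimpleGraph V) (r : V) : ℕ :=
  Finset.univ.sup (fun v => G.dist r v)

/-- A leaf of the rooted tree: a vertex `v ≠ r` of degree 1. -/
def IsTreeLeaf {V : Type*} (G : SimpleGraph V) (r v : V) : Prop :=
  v ≠ r ∧ (G.neighborSet v).ncard = 1

/-- A leaf of an immersion `I`: a vertex `v ≠ r` of degree 1 in `I`. -/
def IsImmLeaf {V : Type*} {G : SimpleGraph V} (r : V) (I : G.Subgraph) (v : V) : Prop :=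
  v ≠ r ∧ (I.neighborSet v).ncard = 1

/-- A feasible covering: a finite set of immersions, each of cost at most `p`,
whose vertex sets cover all vertices. -/
def IsFeasible {V : Type*} [Fintype V] {G : SimpleGraph V} (r : V) (p : ℕ)
    (𝓘 : Finset G.Subgraph) : Prop :=
  (∀ I ∈ 𝓘, IsImmersion r I ∧ immCost I ≤ p) ∧ (∀ v : V, ∃ I ∈ 𝓘, v ∈ I.verts)

/-- Total cost of a set of immersions. -/
noncomputable def totalCost {V : Type*} {G : SimpleGraph V} (𝓘 : Finset G.Subgraph) : ℕ :=
  ∑ I ∈ 𝓘, immCost I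

/-- Optimality for the Min-Distance problem. -/
def MinDistOptimal {V : Type*} [Fintype V] {G : SimpleGraph V} (r : V) (p : ℕ)
    (𝓘 : Finset G.Subgraph) : Prop :=
  IsFeasible r p 𝓘 ∧ ∀ 𝓙 : Finset G.Subgraph, IsFeasible r p 𝓙 → totalCost 𝓘 ≤ totalCost 𝓙

/-- Makespan (maximum collective time) of an assignment `a` of immersions to `k` robots. -/
noncomputable def makespan {V : Type*} {G : SimpleGraph V} (k : ℕ)
    (𝓘 : Finset G.Subgraph) (a : G.Subgraph → Fin k) : ℕ :=
  Finset.univ.sup (fun i : Fin k => ∑ I ∈ 𝓘.filter (fun I => a I = i), immCost I)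

/-- Optimality for the Min-Time problem with `k` robots. -/
def MinTimeOptimal {V : Type*} [Fintype V] {G : SimpleGraph V} (r : V) (p k : ℕ)
    (𝓘 : Finset G.Subgraph) (a : G.Subgraph → Fin k) : Prop :=
  IsFeasible r p 𝓘 ∧ ∀ (𝓙 : Finset G.Subgraph) (b : G.Subgraph → Fin k),
    IsFeasible r p 𝓙 → makespan k 𝓘 a ≤ makespan k 𝓙 b

/-- Optimality for the Min-Immersions problem. -/
def MinImmOptimal {V : Type*} [Fintype V] {G : SimpleGraph V} (r : V) (p : ℕ)
    (𝓘 : Finset G.Subgraph) : Prop :=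
  IsFeasible r p 𝓘 ∧ ∀ 𝓙 : Finset G.Subgraph, IsFeasible r p 𝓙 → 𝓘.card ≤ 𝓙.card

/-!
An optimal solution of least total cost among all optimal solutions works. If two of its immersions
`I ≠ J` contained a leaf `l`, deleting `l` from `J` would leave an immersion that is cheaper by one
edge, because `l` is also a leaf of `J`; everything stays covered, `l` itself by `I`. The number of
immersions has not grown and the total cost has dropped, a contradiction.
-/

section InsertErase

variable {α : Type*} [DecidableEq α] {s : Finset α} {a b : α}

lemma card_insert_erase_le (ha : a ∈ s) : #(insert b (s.erase a)) ≤ #s := by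
  grind

lemma sum_insert_erase_lt {M : Type*} [AddCommMonoid M] [PartialOrder M]
    [IsOrderedCancelAddMonoid M] [CanonicallyOrderedAdd M] {f : α → M}
    (ha : a ∈ s) (hlt : f b < f a) : ∑ x ∈ insert b (s.erase a), f x < ∑ x ∈ s, f x := by
  rw [← add_sum_erase s f ha]
  by_cases hb : b ∈ s.erase a
  · rw [insert_eq_of_mem hb]
    exact lt_add_of_pos_left _ (hlt.trans_le' zero_le)
  · rw [sum_insert hb]
    exact add_lt_add_left hlt _

end InsertErase

section Immersion

variable {V : Type*} {G : SimpleGraph V} {r l : V}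

lemma preconnected_deleteVerts_of_subsingleton_neighborSet {J : G.Subgraph} {s : Set V}
    (hJ : J.Preconnected) (hs : ∀ v ∈ s, (J.neighborSet v).Subsingleton) :
    (J.deleteVerts s).Preconnected := by
  have hind : (J.coe.induce {x | x.1 ∉ s}).Preconnected :=
    hJ.coe.induce_of_degree_eq_one fun v hv x hx y hy =>
      Subtype.ext (hs v (not_not.1 hv) hx hy)
  let f : J.coe.induce {x | x.1 ∉ s} →g (J.deleteVerts s).coe :=
    { toFun := fun x => ⟨x.1, x.1.2, x.2⟩
      map_rel' := fun {x y} hxy =>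
        Subgraph.deleteVerts_adj.2 ⟨x.1.2, x.2, y.1.2, y.2, hxy⟩ }
  exact ⟨hind.map f fun x => ⟨⟨⟨x, x.2.1⟩, x.2.2⟩, rfl⟩⟩

lemma edgeSet_deleteVerts_singleton_ssubset {J : G.Subgraph} {v w : V} (h : J.Adj v w) :
    (J.deleteVerts {v}).edgeSet ⊂ J.edgeSet := by
  refine ⟨Subgraph.edgeSet_mono Subgraph.deleteVerts_le, fun hsub => ?_⟩
  have hdel : (J.deleteVerts {v}).Adj v w := hsub (Subgraph.mem_edgeSet.2 h)
  exact hdel.fst_mem.2 rfl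

lemma immCost_lt_of_edgeSet_ssubset {I J : G.Subgraph} (hJ : J.edgeSet.Finite)
    (h : I.edgeSet ⊂ J.edgeSet) : immCost I < immCost J :=
  Nat.mul_lt_mul_of_pos_left (Set.ncard_lt_ncard h hJ) two_pos

lemma immCost_toSubgraph_le {u v : V} (w : G.Walk u v) : immCost w.toSubgraph ≤ 2 * w.length := by
  classical
  refine Nat.mul_le_mul_left 2 ?_
  rw [Walk.edgeSet_toSubgraph, ← Walk.coe_edges_toFinset, Set.ncard_coe_finset, ← Walk.length_edges]
  exact w.edges.toFinset_card_le

lemma isImmersion_toSubgraph {v : V} (w : G.Walk r v) : IsImmersion r w.toSubgraph :=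
  ⟨w.toSubgraph_connected, w.start_mem_verts_toSubgraph⟩

lemma IsTreeLeaf.isImmLeaf {J : G.Subgraph} (hl : IsTreeLeaf G r l) (hJ : IsImmersion r J)
    (hlJ : l ∈ J.verts) : IsImmLeaf r J l := by
  obtain ⟨w, hw⟩ := Set.ncard_eq_one.1 hl.2
  have : Nontrivial J.verts := ⟨⟨l, hlJ⟩, ⟨r, hJ.2⟩, fun h => hl.1 (congrArg Subtype.val h)⟩
  have hne : (J.neighborSet l).Nonempty :=
    hJ.1.preconnected.exists_adj_of_nontrivial ⟨l, hlJ⟩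
  have hsub : J.neighborSet l ⊆ {w} := hw ▸ J.neighborSet_subset l
  exact ⟨hl.1, Set.ncard_eq_one.2 ⟨w, hne.subset_singleton_iff.1 hsub⟩⟩

lemma IsImmersion.deleteVerts_leaf {J : G.Subgraph} (hJ : IsImmersion r J)
    (hl : IsImmLeaf r J l) : IsImmersion r (J.deleteVerts {l}) := by
  obtain ⟨w, hw⟩ := Set.ncard_eq_one.1 hl.2
  have hr : r ∈ (J.deleteVerts {l}).verts := ⟨hJ.2, hl.1.symm⟩
  have hpre : (J.deleteVerts {l}).Preconnected :=
    preconnected_deleteVerts_of_subsingleton_neighborSet hJ.1.preconnected <| by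
      rintro _ rfl
      exact hw ▸ Set.subsingleton_singleton
  exact ⟨Subgraph.connected_iff.2 ⟨hpre, r, hr⟩, hr⟩

lemma IsImmLeaf.immCost_deleteVerts_lt {J : G.Subgraph} (hl : IsImmLeaf r J l)
    (hJ : J.edgeSet.Finite) : immCost (J.deleteVerts {l}) < immCost J := by
  obtain ⟨w, hw⟩ := Set.ncard_eq_one.1 hl.2
  have hadj : J.Adj l w := (Set.ext_iff.1 hw w).2 rfl
  exact immCost_lt_of_edgeSet_ssubset hJ (edgeSet_deleteVerts_singleton_ssubset hadj)

variable [Fintype V] {p : ℕ} {𝓘 : Finset G.Subgraph}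

lemma IsFeasible.insert_erase [DecidableEq G.Subgraph] {J J' : G.Subgraph} (h𝓘 : IsFeasible r p 𝓘)
    (hJ' : IsImmersion r J') (hcost : immCost J' ≤ p)
    (hcov : ∀ v ∈ J.verts, v ∈ J'.verts ∨ ∃ I ∈ 𝓘.erase J, v ∈ I.verts) :
    IsFeasible r p (insert J' (𝓘.erase J)) := by
  constructor
  · rw [forall_mem_insert]
    exact ⟨⟨hJ', hcost⟩, fun I hI => h𝓘.1 I (mem_of_mem_erase hI)⟩
  · intro v
    rw [exists_mem_insert]
    obtain ⟨I, hI, hvI⟩ := h𝓘.2 v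
    obtain rfl | hIJ := eq_or_ne I J
    · exact hcov v hvI
    · exact .inr ⟨I, mem_erase.2 ⟨hIJ, hI⟩, hvI⟩

lemma exists_isFeasible (hG : G.Connected) (hp : 2 * treeHeight G r ≤ p) :
    ∃ 𝓘 : Finset G.Subgraph, IsFeasible r p 𝓘 := by
  classical
  choose w hw using hG.exists_walk_length_eq_dist r
  refine ⟨univ.image fun v => (w v).toSubgraph, forall_mem_image.2 fun v _ => ?_, fun v =>
    ⟨_, mem_image_of_mem _ (mem_univ v), (w v).end_mem_verts_toSubgraph⟩⟩
  have hdist : G.dist r v ≤ treeHeight G r := le_sup (f := G.dist r) (mem_univ v)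
  refine ⟨isImmersion_toSubgraph (w v), ?_⟩
  calc immCost (w v).toSubgraph ≤ 2 * (w v).length := immCost_toSubgraph_le _
    _ = 2 * G.dist r v := by rw [hw]
    _ ≤ p := (Nat.mul_le_mul_left 2 hdist).trans hp

lemma exists_minImmOptimal (h : ∃ 𝓘 : Finset G.Subgraph, IsFeasible r p 𝓘) :
    ∃ 𝓘 : Finset G.Subgraph, MinImmOptimal r p 𝓘 := by
  obtain ⟨𝓘, h𝓘⟩ := exists_minimalFor_of_wellFoundedLT (IsFeasible r p) card h
  exact ⟨𝓘, h𝓘.1, fun _ h𝓙 => h𝓘.le h𝓙⟩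

lemma MinImmOptimal.of_card_le {𝓙 : Finset G.Subgraph} (h𝓘 : MinImmOptimal r p 𝓘)
    (h𝓙 : IsFeasible r p 𝓙) (hcard : #𝓙 ≤ #𝓘) : MinImmOptimal r p 𝓙 :=
  ⟨h𝓙, fun 𝓚 h𝓚 => hcard.trans (h𝓘.2 𝓚 h𝓚)⟩

lemma eq_of_minimalFor_totalCost_of_isTreeLeaf
    (h𝓘 : MinimalFor (MinImmOptimal r p) totalCost 𝓘) (hl : IsTreeLeaf G r l)
    {I J : G.Subgraph} (hI : I ∈ 𝓘) (hlI : l ∈ I.verts) (hJ : J ∈ 𝓘) (hlJ : l ∈ J.verts) :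
    I = J := by
  classical
  by_contra hIJ
  obtain ⟨hJimm, hJcost⟩ := h𝓘.1.1.1 J hJ
  have hleaf : IsImmLeaf r J l := hl.isImmLeaf hJimm hlJ
  have hlt : immCost (J.deleteVerts {l}) < immCost J :=
    hleaf.immCost_deleteVerts_lt J.edgeSet.toFinite
  have hcov : ∀ v ∈ J.verts, v ∈ (J.deleteVerts {l}).verts ∨ ∃ K ∈ 𝓘.erase J, v ∈ K.verts := by
    intro v hv
    obtain rfl | hvl := eq_or_ne v l
    · exact .inr ⟨I, mem_erase.2 ⟨hIJ, hI⟩, hlI⟩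
    · exact .inl ⟨hv, hvl⟩
  have hfeas : IsFeasible r p (insert (J.deleteVerts {l}) (𝓘.erase J)) :=
    h𝓘.1.1.insert_erase (hJimm.deleteVerts_leaf hleaf) (hlt.le.trans hJcost) hcov
  exact h𝓘.not_lt (h𝓘.1.of_card_le hfeas (card_insert_erase_le hJ)) (sum_insert_erase_lt hJ hlt)

end Immersion

theorem stmt_5_general {V : Type*} [Fintype V] {G : SimpleGraph V} {r : V} {p : ℕ}
    (hG : G.Connected) (hp : 2 * treeHeight G r ≤ p) :
    ∃ 𝓘 : Finset G.Subgraph, MinImmOptimal r p 𝓘 ∧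
      ∀ l : V, IsTreeLeaf G r l → ∃! I : G.Subgraph, I ∈ 𝓘 ∧ l ∈ I.verts := by
  obtain ⟨𝓘, h𝓘⟩ := exists_minimalFor_of_wellFoundedLT (MinImmOptimal r p) totalCost
    (exists_minImmOptimal (exists_isFeasible hG hp))
  refine ⟨𝓘, h𝓘.1, fun l hl => ?_⟩
  obtain ⟨I, hI, hlI⟩ := h𝓘.1.1.2 l
  exact ⟨I, ⟨hI, hlI⟩, fun J ⟨hJ, hlJ⟩ =>
    eq_of_minimalFor_totalCost_of_isTreeLeaf h𝓘 hl hJ hlJ hI hlI⟩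

theorem stmt_5 {V : Type*} [Fintype V] (T : SimpleGraph V) (r : V) (p : ℕ)
    (hT : T.IsTree) (hp : 2 * treeHeight T r ≤ p) :
    ∃ 𝓘 : Finset T.Subgraph, MinImmOptimal r p 𝓘 ∧
      ∀ l : V, IsTreeLeaf T r l → ∃! I : T.Subgraph, I ∈ 𝓘 ∧ l ∈ I.verts :=
  stmt_5_general hT.connected hp
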